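/- arXiv:1906.07958 — 5 statements merged into one kernel-verified Lean document; each statement's English description precedes it below -/
import Mathlib

section
/- Let n ≥ 1 and let g, M, Ω : ℝ → Matrix (Fin n) (Fin n) ℝ be such that Ω is continuous, g(t) is invertible for every t, g has derivative g'(t) = g(t) * Ω(t) at every t, and M has derivative M'(t) = M(t) * Ω(t) − Ω(t) * M(t) at every t. Then the right momentum m(t) := g(t) * M(t) * g(t)⁻¹ is constant: for all t, g(t) * M(t) * g(t)⁻¹ = g(0) * M(0) * g(0)⁻¹. -/
attribute [local instance] Matrix.linftyOpNormedAddCommGroup Matrix.linftyOpNormedRing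
  Matrix.linftyOpNormedSpace Matrix.linftyOpNormedAlgebra

/-! Conjugation by a curve `g` with `g' = gΩ` turns the derivative of `M` into the covariant
derivative `M' - [M, Ω]`, that is, `(g M g⁻¹)' = g (M' - [M, Ω]) g⁻¹`. The Euler–Poincaré equation
says that this covariant derivative vanishes. -/

open scoped Ring

section NormedAlgebra

variable {𝕜 A : Type*} [NormedRing A] [HasSummableGeomSeries A]

theorem hasDerivAt_ringInverse_comp [NontriviallyNormedField 𝕜] [NormedAlgebra 𝕜 A]
    {c : 𝕜 → A} {c' : A} {t : 𝕜} (hc : HasDerivAt c c' t) (ht : IsUnit (c t)) :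
    HasDerivAt (fun s => (c s)⁻¹ʳ) (-((c t)⁻¹ʳ * c' * (c t)⁻¹ʳ)) t := by
  obtain ⟨u, hu⟩ := ht
  have hinv := hasFDerivAt_ringInverse (𝕜 := 𝕜) u
  rw [hu] at hinv
  simpa [← hu, Function.comp_def] using hinv.comp_hasDerivAt t hc

theorem hasDerivAt_mul_mul_ringInverse [NontriviallyNormedField 𝕜] [NormedAlgebra 𝕜 A]
    {g M : 𝕜 → A} {ω M' : A} {t : 𝕜} (hgt : IsUnit (g t))
    (hg : HasDerivAt g (g t * ω) t) (hM : HasDerivAt M M' t) :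
    HasDerivAt (fun s => g s * M s * (g s)⁻¹ʳ) (g t * (M' - ⁅M t, ω⁆) * (g t)⁻¹ʳ) t := by
  have hinv : HasDerivAt (fun s => (g s)⁻¹ʳ) (-(ω * (g t)⁻¹ʳ)) t := by
    simpa only [Ring.inverse_mul_cancel_left _ _ hgt] using hasDerivAt_ringInverse_comp hg hgt
  refine ((hg.mul hM).mul hinv).congr_deriv ?_
  simp only [Ring.lie_def, Pi.mul_apply]
  noncomm_ring

theorem right_momentum_conserved_general [RCLike 𝕜] [NormedAlgebra 𝕜 A] {g M Ω : 𝕜 → A}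
    (hginv : ∀ t, IsUnit (g t)) (hg : ∀ t, HasDerivAt g (g t * Ω t) t)
    (hM : ∀ t, HasDerivAt M (M t * Ω t - Ω t * M t) t) (s t : 𝕜) :
    g s * M s * (g s)⁻¹ʳ = g t * M t * (g t)⁻¹ʳ := by
  have hm (r : 𝕜) : HasDerivAt (fun r => g r * M r * (g r)⁻¹ʳ) 0 r := by
    simpa only [Ring.lie_def, sub_self, mul_zero, zero_mul] using
      hasDerivAt_mul_mul_ringInverse (hginv r) (hg r) (hM r)
  exact is_const_of_deriv_eq_zero (fun r => (hm r).differentiableAt) (fun r => (hm r).deriv) s t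

end NormedAlgebra

/-- If `g' = gΩ` and the left momentum satisfies the Euler–Poincaré equation
`M' = [M, Ω] = MΩ − ΩM`, then the right momentum `m(t) = g(t) M(t) g(t)⁻¹` is conserved. -/
theorem right_momentum_conserved (n : ℕ) (hn : 1 ≤ n)
    (g M Ω : ℝ → Matrix (Fin n) (Fin n) ℝ)
    (hΩcont : Continuous Ω)
    (hginv : ∀ t : ℝ, IsUnit (g t))
    (hg : ∀ t : ℝ, HasDerivAt g (g t * Ω t) t)
    (hM : ∀ t : ℝ, HasDerivAt M (M t * Ω t - Ω t * M t) t) :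
    ∀ t : ℝ, g t * M t * (g t)⁻¹ = g 0 * M 0 * (g 0)⁻¹ := by
  simpa only [Matrix.nonsing_inv_eq_ringInverse] using
    (right_momentum_conserved_general hginv hg hM · 0)
end

section
/- Let n ≥ 1, let κ ∈ ℝ, and let M : ℝ → Matrix (Fin n) (Fin n) ℝ satisfy, at every t, the Euler equation M'(t) = κ•(M(t) * M(t)ᵀ − M(t)ᵀ * M(t)). Then both the skew part and the determinant of M are conserved: for all t ∈ ℝ, M(t) − M(t)ᵀ = M(0) − M(0)ᵀ and det(M(t)) = det(M(0)). -/
open Matrix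

attribute [local instance] Matrix.linftyOpNormedAddCommGroup Matrix.linftyOpNormedRing
  Matrix.linftyOpNormedSpace Matrix.linftyOpNormedAlgebra

/-!
Since `[M, Mᵀ]` is symmetric, the skew part of `M` has zero derivative. Since it is a commutator
with `M`, the equation is of Lax form `M' = [M, B]`; by Jacobi's formula and the cyclicity of the
trace, `(det M)' = tr ([M, B] adj M) = tr (B (adj M · M - M · adj M)) = 0`.
-/

section Algebra

variable {m R : Type*} [Fintype m] [CommRing R]

theorem isSymm_mul_transpose_sub_transpose_mul (M : Matrix m m R) : (M * Mᵀ - Mᵀ * M).IsSymm :=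
  (isSymm_mul_transpose_self M).sub (isSymm_transpose_mul_self M)

variable [DecidableEq m]

theorem det_updateRow_eq_vecMul_adjugate (M : Matrix m m R) (i : m) (v : m → R) :
    (M.updateRow i v).det = (v ᵥ* M.adjugate) i := by
  rw [← cramer_transpose_apply, cramer_eq_adjugate_mulVec, ← adjugate_transpose, mulVec_transpose]

theorem sum_det_updateRow (M N : Matrix m m R) :
    ∑ i, (M.updateRow i (N i)).det = (N * M.adjugate).trace :=
  Finset.sum_congr rfl fun i _ ↦ det_updateRow_eq_vecMul_adjugate M i (N i)

theorem trace_lie_mul_adjugate (M B : Matrix m m R) : (⁅M, B⁆ * M.adjugate).trace = 0 :=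
  calc (⁅M, B⁆ * M.adjugate).trace
      = (M * B * M.adjugate).trace - (B * M * M.adjugate).trace := by
        rw [Ring.lie_def, sub_mul, trace_sub]
    _ = (B * (M.adjugate * M)).trace - (B * (M * M.adjugate)).trace := by
        rw [mul_assoc M, trace_mul_comm M, mul_assoc, mul_assoc]
    _ = 0 := by rw [adjugate_mul, mul_adjugate, sub_self]

/-- The determinant as a continuous multilinear function of the rows of a matrix, so that its
derivative is an instance of the derivative of a multilinear map. -/
def detContinuousMultilinearMap (m R : Type*) [Fintype m] [DecidableEq m] [CommRing R]
    [TopologicalSpace R] [IsTopologicalRing R] :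
    ContinuousMultilinearMap R (fun _ : m ↦ m → R) R where
  toMultilinearMap := (detRowAlternating (n := m) (R := R)).toMultilinearMap
  cont := Continuous.matrix_det (A := fun M : Matrix m m R ↦ M) continuous_id

end Algebra

section Derivative

variable {m n 𝕜 E : Type*} [NontriviallyNormedField 𝕜] [Finite m] [Finite n]
  [NormedAddCommGroup E] [NormedSpace 𝕜 E]

theorem hasDerivAt_matrix {M : 𝕜 → Matrix m n E} {M' : Matrix m n E} {t : 𝕜} :
    HasDerivAt M M' t ↔ ∀ i j, HasDerivAt (fun s ↦ M s i j) (M' i j) t := by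
  have := Fintype.ofFinite m
  have := Fintype.ofFinite n
  -- `HasDerivAt` depends only on the topology, which on matrices is the product topology.
  exact hasDerivAt_pi.trans (forall_congr' fun _ ↦ hasDerivAt_pi)

theorem hasDerivAt_transpose {M : 𝕜 → Matrix m n E} {M' : Matrix m n E} {t : 𝕜}
    (hM : HasDerivAt M M' t) : HasDerivAt (fun s ↦ (M s)ᵀ) M'ᵀ t :=
  hasDerivAt_matrix.2 fun i j ↦ hasDerivAt_matrix.1 hM j i

theorem hasDerivAt_det {ι A : Type*} [Fintype ι] [DecidableEq ι] [NormedCommRing A]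
    [NormedAlgebra 𝕜 A] {M : 𝕜 → Matrix ι ι A} {M' : Matrix ι ι A} {t : 𝕜}
    (hM : HasDerivAt M M' t) :
    HasDerivAt (fun s ↦ (M s).det) (M' * (M t).adjugate).trace t := by
  let f := (detContinuousMultilinearMap ι A).restrictScalars 𝕜
  have hf : f.linearDeriv (M t) M' = (M' * (M t).adjugate).trace :=
    (f.linearDeriv_apply (M t) M').trans (sum_det_updateRow (M t) M')
  exact hf ▸ (f.hasFDerivAt (M t)).comp_hasDerivAt t hM

end Derivative

section Conservation

variable {𝕜 : Type*} [RCLike 𝕜]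

theorem eq_of_forall_hasDerivAt_zero {E : Type*} [NormedAddCommGroup E] [NormedSpace 𝕜 E]
    {f : 𝕜 → E} (hf : ∀ t, HasDerivAt f 0 t) (s t : 𝕜) : f s = f t :=
  is_const_of_deriv_eq_zero (fun r ↦ (hf r).differentiableAt) (fun r ↦ (hf r).deriv) s t

theorem sub_transpose_eq_of_isSymm_deriv {m E : Type*} [Finite m] [NormedAddCommGroup E]
    [NormedSpace 𝕜 E] {M M' : 𝕜 → Matrix m m E} (hM : ∀ t, HasDerivAt M (M' t) t)
    (hM' : ∀ t, (M' t).IsSymm) (s t : 𝕜) : M s - (M s)ᵀ = M t - (M t)ᵀ := by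
  have := Fintype.ofFinite m
  refine eq_of_forall_hasDerivAt_zero (f := fun r ↦ M r - (M r)ᵀ) (fun r ↦ ?_) s t
  have h := (hM r).fun_sub (hasDerivAt_transpose (hM r))
  rwa [(hM' r).eq, sub_self] at h

variable {m A : Type*} [Fintype m] [DecidableEq m] [NormedCommRing A] [NormedAlgebra 𝕜 A]

theorem det_eq_of_hasDerivAt_lie {M B : 𝕜 → Matrix m m A}
    (hM : ∀ t, HasDerivAt M ⁅M t, B t⁆ t) (s t : 𝕜) : (M s).det = (M t).det := by
  refine eq_of_forall_hasDerivAt_zero (f := fun r ↦ (M r).det) (fun r ↦ ?_) s t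
  have h := hasDerivAt_det (hM r)
  rwa [trace_lie_mul_adjugate] at h

theorem euler_skew_and_det_conserved_general (κ : 𝕜 → A) (M : 𝕜 → Matrix m m A)
    (hM : ∀ t, HasDerivAt M (κ t • (M t * (M t)ᵀ - (M t)ᵀ * M t)) t) (s t : 𝕜) :
    M s - (M s)ᵀ = M t - (M t)ᵀ ∧ (M s).det = (M t).det := by
  have hLax (r : 𝕜) : HasDerivAt M ⁅M r, κ r • (M r)ᵀ⁆ r := by
    rw [Ring.lie_def, Matrix.mul_smul, Matrix.smul_mul, ← smul_sub]
    exact hM r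
  have hSymm (r : 𝕜) : (κ r • (M r * (M r)ᵀ - (M r)ᵀ * M r)).IsSymm :=
    (isSymm_mul_transpose_sub_transpose_mul (M r)).smul (κ r)
  exact ⟨sub_transpose_eq_of_isSymm_deriv hM hSymm s t, det_eq_of_hasDerivAt_lie hLax s t⟩

end Conservation

/-- For a solution of the Euler equation `M' = κ[M, Mᵀ]`, both the skew-symmetric part
`M − Mᵀ` and the determinant of `M` are conserved. -/
theorem euler_skew_and_det_conserved (n : ℕ) (hn : 1 ≤ n) (κ : ℝ)
    (M : ℝ → Matrix (Fin n) (Fin n) ℝ)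
    (hM : ∀ t : ℝ, HasDerivAt M (κ • (M t * (M t)ᵀ - (M t)ᵀ * M t)) t) :
    ∀ t : ℝ, M t - (M t)ᵀ = M 0 - (M 0)ᵀ ∧ (M t).det = (M 0).det :=
  fun t ↦ euler_skew_and_det_conserved_general (fun _ ↦ κ) M hM t 0
end

section
/- Let δ > 0 and let S_δ = {X : Matrix (Fin 2) (Fin 2) ℝ | X.trace = 0 ∧ X.det = −δ}. Suppose F : Matrix (Fin 2) (Fin 2) ℝ → ℝ is continuous on S_δ and invariant under conjugation by the modular group: F(γ_ℝ * X * γ_ℝ⁻¹) = F(X) for every γ ∈ SL(2,ℤ) and every X ∈ S_δ. Then F is constant on S_δ. -/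
/-- The real matrix obtained from an element of the modular group `SL(2,ℤ)`. -/
noncomputable def modularToReal (γ : Matrix.SpecialLinearGroup (Fin 2) ℤ) :
    Matrix (Fin 2) (Fin 2) ℝ :=
  (γ : Matrix (Fin 2) (Fin 2) ℤ).map ((↑) : ℤ → ℝ)

/-!
A point of the hyperboloid `S_δ` is determined by its eigenlines `ℝ x` (eigenvalue `√δ`) and `ℝ y`
(eigenvalue `-√δ`), and conjugation moves these lines by the linear action on `ℝ²`. So an invariant
function on `S_δ` is a function `G x y` of two distinct lines, invariant under the diagonal action
of `SL(2,ℤ)`.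

Hopf's argument: if `γ ∈ SL(2,ℤ)` is hyperbolic with repelling eigenline `y₀`, then the powers of
`γ` pull every line `x ≠ y₀` to the attracting eigenline while fixing `y₀`, so `G x y₀ = c` does not
depend on `x`. The set of `y` such that `G x y = c` for all `x` is closed, stable under `SL(2,ℤ)`
and under scaling, and contains `y₀`; since every orbit of `SL(2,ℤ)` on the projective line is
dense, it is the whole plane.
-/

open Filter Topology
open scoped Matrix

section Wedge

variable {R : Type*} [CommRing R]

/-- The standard area form on the plane `R²`; it vanishes exactly on dependent pairs of vectors
when `R` is a field. -/
def wedge (x y : Fin 2 → R) : R :=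
  x 0 * y 1 - x 1 * y 0

theorem wedge_smul_left (a : R) (x y : Fin 2 → R) : wedge (a • x) y = a * wedge x y := by
  simp only [wedge, Pi.smul_apply, smul_eq_mul]
  ring

theorem wedge_smul_right (a : R) (x y : Fin 2 → R) : wedge x (a • y) = a * wedge x y := by
  simp only [wedge, Pi.smul_apply, smul_eq_mul]
  ring

theorem wedge_add_smul_left (x y : Fin 2 → R) (t : R) : wedge (x + t • y) y = wedge x y := by
  simp only [wedge, Pi.add_apply, Pi.smul_apply, smul_eq_mul]
  ring

theorem wedge_mulVec_mulVec (A : Matrix (Fin 2) (Fin 2) R) (x y : Fin 2 → R) :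
    wedge (A *ᵥ x) (A *ᵥ y) = A.det * wedge x y := by
  simp only [wedge, Matrix.mulVec_fin_two, Matrix.det_fin_two, Matrix.cons_val_zero,
    Matrix.cons_val_one]
  ring

theorem wedge_smul_eq_add (x y z : Fin 2 → R) :
    wedge x y • z = wedge z y • x + wedge x z • y := by
  ext i
  fin_cases i <;>
    simp only [wedge, Fin.zero_eta, Fin.mk_one, Pi.add_apply, Pi.smul_apply, smul_eq_mul] <;> ring

theorem dotProduct_eq_wedge (x y : Fin 2 → R) : x ⬝ᵥ ![y 1, -y 0] = wedge x y := by
  simp only [dotProduct, wedge, Fin.sum_univ_two, Matrix.cons_val_zero, Matrix.cons_val_one]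
  ring

theorem continuous_wedge [TopologicalSpace R] [IsTopologicalRing R] :
    Continuous fun p : (Fin 2 → R) × (Fin 2 → R) ↦ wedge p.1 p.2 := by
  unfold wedge
  fun_prop

theorem eq_of_mulVec_eq_of_wedge_ne_zero [IsDomain R] {m : Type*} {A B : Matrix m (Fin 2) R}
    {x y : Fin 2 → R} (hxy : wedge x y ≠ 0) (hx : A *ᵥ x = B *ᵥ x) (hy : A *ᵥ y = B *ᵥ y) :
    A = B := by
  refine Matrix.ext_iff_mulVec.2 fun z ↦ smul_right_injective _ hxy ?_
  simp only [← Matrix.mulVec_smul, wedge_smul_eq_add x y z, Matrix.mulVec_add]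
  simp only [Matrix.mulVec_smul, hx, hy]

end Wedge

/-- The hyperboloid `S_δ` of the paper: in terms of the entries of a traceless matrix
`!![u, v; w, -u]`, it is `u ^ 2 + v * w = δ`. -/
def oneSheetedHyperboloid {R : Type*} [CommRing R] (δ : R) : Set (Matrix (Fin 2) (Fin 2) R) :=
  {A | A.trace = 0 ∧ A.det = -δ}

section Eigenvectors

theorem exists_mulVec_eq_smul_of_isRoot_charpoly {R n : Type*} [CommRing R] [IsDomain R]
    [Fintype n] [DecidableEq n] {A : Matrix n n R} {a : R} (ha : A.charpoly.IsRoot a) :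
    ∃ x ≠ 0, A *ᵥ x = a • x := by
  rw [Polynomial.IsRoot, Matrix.eval_charpoly] at ha
  obtain ⟨x, hx₀, hx⟩ := Matrix.exists_mulVec_eq_zero_iff.2 ha
  rw [Matrix.sub_mulVec, Matrix.scalar_apply, ← Matrix.smul_one_eq_diagonal, Matrix.smul_mulVec,
    Matrix.one_mulVec, sub_eq_zero] at hx
  exact ⟨x, hx₀, hx.symm⟩

variable {K : Type*} [Field K]

theorem exists_eq_smul_of_wedge_eq_zero {x y : Fin 2 → K} (hy : y ≠ 0) (hxy : wedge x y = 0) :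
    ∃ c : K, x = c • y := by
  obtain ⟨i, hi⟩ := Function.ne_iff.1 hy
  refine ⟨x i / y i, funext fun j ↦ ?_⟩
  have hij : x j * y i = x i * y j := by
    unfold wedge at hxy
    fin_cases i <;> fin_cases j <;> grind
  simp only [Pi.smul_apply, smul_eq_mul, div_mul_eq_mul_div]
  exact eq_div_of_mul_eq hi hij

theorem wedge_ne_zero_of_eigenvectors {A : Matrix (Fin 2) (Fin 2) K} {x y : Fin 2 → K} {a b : K}
    (hab : a ≠ b) (hx₀ : x ≠ 0) (hy₀ : y ≠ 0) (hx : A *ᵥ x = a • x) (hy : A *ᵥ y = b • y) :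
    wedge x y ≠ 0 := by
  intro hxy
  obtain ⟨c, rfl⟩ := exists_eq_smul_of_wedge_eq_zero hy₀ hxy
  rw [Matrix.mulVec_smul, hy, smul_comm] at hx
  exact hab (smul_left_injective K hx₀ hx).symm

/-- The matrix with eigenvector `x` for `s` and eigenvector `y` for `-s`. It is `s • (2P - 1)`,
where `P` is the projection onto the line of `x` along the line of `y`; the division makes it
meaningless when `wedge x y = 0`. -/
def matrixOfEigenvectors (s : K) (x y : Fin 2 → K) : Matrix (Fin 2) (Fin 2) K :=
  s • ((2 / wedge x y) • Matrix.vecMulVec x ![y 1, -y 0] - 1)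

variable {s : K} {x y : Fin 2 → K}

theorem matrixOfEigenvectors_mulVec (s : K) (x y z : Fin 2 → K) :
    matrixOfEigenvectors s x y *ᵥ z = s • ((2 / wedge x y * wedge z y) • x - z) := by
  rw [matrixOfEigenvectors, Matrix.smul_mulVec, Matrix.sub_mulVec, Matrix.smul_mulVec,
    Matrix.vecMulVec_mulVec, Matrix.one_mulVec, dotProduct_comm, dotProduct_eq_wedge,
    op_smul_eq_smul, smul_smul]

theorem matrixOfEigenvectors_mulVec_left (s : K) (hxy : wedge x y ≠ 0) :
    matrixOfEigenvectors s x y *ᵥ x = s • x := by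
  rw [matrixOfEigenvectors_mulVec, div_mul_cancel₀ _ hxy, two_smul, add_sub_cancel_right]

theorem matrixOfEigenvectors_mulVec_right (s : K) (x y : Fin 2 → K) :
    matrixOfEigenvectors s x y *ᵥ y = -s • y := by
  have hyy : wedge y y = 0 := by unfold wedge; ring
  rw [matrixOfEigenvectors_mulVec, hyy, mul_zero, zero_smul, zero_sub, smul_neg, neg_smul]

theorem eq_matrixOfEigenvectors {A : Matrix (Fin 2) (Fin 2) K} (hxy : wedge x y ≠ 0)
    (hx : A *ᵥ x = s • x) (hy : A *ᵥ y = -s • y) : A = matrixOfEigenvectors s x y :=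
  eq_of_mulVec_eq_of_wedge_ne_zero hxy (hx.trans (matrixOfEigenvectors_mulVec_left s hxy).symm)
    (hy.trans (matrixOfEigenvectors_mulVec_right s x y).symm)

theorem matrixOfEigenvectors_smul_smul (s : K) {a b : K} (ha : a ≠ 0) (hb : b ≠ 0)
    (hxy : wedge x y ≠ 0) :
    matrixOfEigenvectors s (a • x) (b • y) = matrixOfEigenvectors s x y := by
  refine (eq_matrixOfEigenvectors ?_ ?_ ?_).symm
  · rw [wedge_smul_left, wedge_smul_right]
    exact mul_ne_zero ha (mul_ne_zero hb hxy)
  · rw [Matrix.mulVec_smul, matrixOfEigenvectors_mulVec_left s hxy, smul_comm]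
  · rw [Matrix.mulVec_smul, matrixOfEigenvectors_mulVec_right, smul_comm]

theorem conj_matrixOfEigenvectors (s : K) {A : Matrix (Fin 2) (Fin 2) K} (hA : A.det ≠ 0)
    (hxy : wedge x y ≠ 0) :
    A * matrixOfEigenvectors s x y * A⁻¹ = matrixOfEigenvectors s (A *ᵥ x) (A *ᵥ y) := by
  have conj_mulVec (z : Fin 2 → K) : (A * matrixOfEigenvectors s x y * A⁻¹) *ᵥ (A *ᵥ z) =
      A *ᵥ (matrixOfEigenvectors s x y *ᵥ z) := by
    rw [Matrix.mulVec_mulVec, Matrix.nonsing_inv_mul_cancel_right _ _ hA.isUnit,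
      Matrix.mulVec_mulVec]
  refine eq_matrixOfEigenvectors ?_ ?_ ?_
  · rw [wedge_mulVec_mulVec]
    exact mul_ne_zero hA hxy
  · rw [conj_mulVec, matrixOfEigenvectors_mulVec_left s hxy, Matrix.mulVec_smul]
  · rw [conj_mulVec, matrixOfEigenvectors_mulVec_right, Matrix.mulVec_smul]

theorem trace_matrixOfEigenvectors (s : K) (hxy : wedge x y ≠ 0) :
    (matrixOfEigenvectors s x y).trace = 0 := by
  rw [matrixOfEigenvectors, Matrix.trace_smul, Matrix.trace_sub, Matrix.trace_smul,
    Matrix.trace_vecMulVec, dotProduct_eq_wedge, Matrix.trace_one, smul_eq_mul (2 / _),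
    div_mul_cancel₀ _ hxy, Fintype.card_fin, Nat.cast_ofNat, sub_self, smul_zero]

theorem det_matrixOfEigenvectors (s : K) (hxy : wedge x y ≠ 0) :
    (matrixOfEigenvectors s x y).det = -s ^ 2 := by
  refine mul_right_cancel₀ hxy ?_
  rw [← wedge_mulVec_mulVec, matrixOfEigenvectors_mulVec_left s hxy,
    matrixOfEigenvectors_mulVec_right, wedge_smul_left, wedge_smul_right]
  ring

theorem matrixOfEigenvectors_mem_oneSheetedHyperboloid (s : K) (hxy : wedge x y ≠ 0) :
    matrixOfEigenvectors s x y ∈ oneSheetedHyperboloid (s ^ 2) :=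
  ⟨trace_matrixOfEigenvectors s hxy, det_matrixOfEigenvectors s hxy⟩

theorem exists_eq_matrixOfEigenvectors {A : Matrix (Fin 2) (Fin 2) K} (hs : s ≠ -s)
    (hA : A ∈ oneSheetedHyperboloid (s ^ 2)) :
    ∃ x y, wedge x y ≠ 0 ∧ A = matrixOfEigenvectors s x y := by
  obtain ⟨htr, hdet⟩ := hA
  have hroot (t : K) (ht : t ^ 2 = s ^ 2) : A.charpoly.IsRoot t := by
    simp [Matrix.charpoly_fin_two, htr, hdet, ht]
  obtain ⟨x, hx₀, hx⟩ := exists_mulVec_eq_smul_of_isRoot_charpoly (hroot s rfl)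
  obtain ⟨y, hy₀, hy⟩ := exists_mulVec_eq_smul_of_isRoot_charpoly (hroot (-s) (neg_sq s))
  have hxy := wedge_ne_zero_of_eigenvectors hs hx₀ hy₀ hx hy
  exact ⟨x, y, hxy, eq_matrixOfEigenvectors hxy hx hy⟩

theorem continuousOn_matrixOfEigenvectors [TopologicalSpace K] [IsTopologicalDivisionRing K]
    {T : Type*} [TopologicalSpace T] {f g : T → Fin 2 → K} {S : Set T} (s : K)
    (hf : ContinuousOn f S) (hg : ContinuousOn g S) (hfg : ∀ t ∈ S, wedge (f t) (g t) ≠ 0) :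
    ContinuousOn (fun t ↦ matrixOfEigenvectors s (f t) (g t)) S := by
  have hdiv : ContinuousOn (fun t ↦ 2 / wedge (f t) (g t)) S :=
    continuousOn_const.div (continuous_wedge.comp_continuousOn (hf.prodMk hg)) hfg
  have hvec : Continuous fun p : (Fin 2 → K) × (Fin 2 → K) ↦
      Matrix.vecMulVec p.1 ![p.2 1, -p.2 0] := by fun_prop
  exact ((hdiv.smul (hvec.comp_continuousOn (hf.prodMk hg))).sub continuousOn_const).const_smul s

end Eigenvectors

section ModularGroup

theorem det_modularToReal (γ : Matrix.SpecialLinearGroup (Fin 2) ℤ) :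
    (modularToReal γ).det = 1 :=
  (Matrix.SpecialLinearGroup.map (Int.castRingHom ℝ) γ).det_coe

theorem modularToReal_mulVec (γ : Matrix.SpecialLinearGroup (Fin 2) ℤ) (v : Fin 2 → ℝ) :
    modularToReal γ *ᵥ v = ![γ 0 0 * v 0 + γ 0 1 * v 1, γ 1 0 * v 0 + γ 1 1 * v 1] :=
  Matrix.mulVec_fin_two _ v

theorem modularToReal_T_zpow_mulVec (n : ℤ) (v : Fin 2 → ℝ) :
    modularToReal (ModularGroup.T ^ n) *ᵥ v = v + (n * v 1) • ![1, 0] := by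
  rw [modularToReal_mulVec, ModularGroup.coe_T_zpow]
  ext i
  fin_cases i <;> simp

theorem exists_modularToReal_mulVec_eq_ratCast (r : ℚ) :
    ∃ γ, modularToReal γ *ᵥ ![1, 0] = (r.den : ℝ) • ![(r : ℝ), 1] := by
  obtain ⟨γ, hγ₀, hγ₁⟩ := r.isCoprime_num_den.exists_SL2_col 0
  have hr : (r.den : ℝ) * r = r.num := by exact_mod_cast r.den_mul_eq_num
  refine ⟨γ, ?_⟩
  rw [modularToReal_mulVec, hγ₀, hγ₁]
  simp [hr]

variable {V : Set (Fin 2 → ℝ)} {v : Fin 2 → ℝ}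

theorem horizontal_mem_of_isClosed_of_modularToReal_mulVec_mem (hclosed : IsClosed V)
    (hsmul : ∀ a : ℝ, ∀ v ∈ V, a • v ∈ V) (hmod : ∀ γ, ∀ v ∈ V, modularToReal γ *ᵥ v ∈ V)
    (hv : v ∈ V) (hv₀ : v ≠ 0) : ![1, 0] ∈ V := by
  by_cases hv₁ : v 1 = 0
  · have hv_eq : v = v 0 • ![1, 0] := by
      ext i
      fin_cases i <;> simp [hv₁]
    have hv₀₀ : v 0 ≠ 0 := fun h ↦ hv₀ (by rw [hv_eq, h, zero_smul])
    rw [hv_eq] at hv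
    simpa only [inv_smul_smul₀ hv₀₀] using hsmul (v 0)⁻¹ _ hv
  · -- The directions of `T ^ n v` converge to the direction fixed by `T`.
    have hlim : Tendsto (fun n : ℕ ↦ ((n : ℝ)⁻¹ * (v 1)⁻¹) • v + ![1, 0]) atTop (𝓝 ![1, 0]) := by
      simpa using ((tendsto_inv_atTop_nhds_zero_nat (𝕜 := ℝ)).mul_const (v 1)⁻¹).smul_const v
        |>.add_const ![1, 0]
    refine hclosed.mem_of_tendsto hlim ((eventually_ne_atTop 0).mono fun n hn ↦ ?_)
    have hscale : (n : ℝ)⁻¹ * (v 1)⁻¹ * (n * v 1) = 1 := by field_simp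
    convert hsmul ((n : ℝ)⁻¹ * (v 1)⁻¹) _ (hmod (ModularGroup.T ^ (n : ℤ)) v hv) using 1
    rw [modularToReal_T_zpow_mulVec, smul_add, smul_smul, Int.cast_natCast, hscale, one_smul]

theorem eq_univ_of_isClosed_of_modularToReal_mulVec_mem (hclosed : IsClosed V)
    (hsmul : ∀ a : ℝ, ∀ v ∈ V, a • v ∈ V) (hmod : ∀ γ, ∀ v ∈ V, modularToReal γ *ᵥ v ∈ V)
    (hv : v ∈ V) (hv₀ : v ≠ 0) : V = Set.univ := by
  have horizontal_mem : ![1, 0] ∈ V :=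
    horizontal_mem_of_isClosed_of_modularToReal_mulVec_mem hclosed hsmul hmod hv hv₀
  have rational_mem (r : ℚ) : ![(r : ℝ), 1] ∈ V := by
    obtain ⟨γ, hγ⟩ := exists_modularToReal_mulVec_eq_ratCast r
    have hden : (r.den : ℝ) ≠ 0 := Nat.cast_ne_zero.2 r.den_ne_zero
    simpa [hγ, hden] using hsmul (r.den : ℝ)⁻¹ _ (hmod γ _ horizontal_mem)
  have real_mem (t : ℝ) : ![t, 1] ∈ V :=
    Rat.denseRange_cast.induction_on t (hclosed.preimage (by fun_prop)) rational_mem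
  refine Set.eq_univ_of_forall fun w ↦ ?_
  by_cases hw : w 1 = 0
  · convert hsmul (w 0) _ horizontal_mem
    ext i; fin_cases i <;> simp [hw]
  · convert hsmul (w 1) _ (real_mem (w 0 / w 1))
    ext i; fin_cases i <;> simp [hw, mul_div_cancel₀]

end ModularGroup

section Hopf

theorem eq_apply_zero_of_smul_invariant {𝕜 E Y : Type*} [NormedField 𝕜] [AddCommGroup E]
    [Module 𝕜 E] [TopologicalSpace E] [ContinuousSMul 𝕜 E] [TopologicalSpace Y] [T1Space Y]
    {g : E → Y} (hg : ContinuousAt g 0) {r : 𝕜} (hr : ‖r‖ < 1) (hinv : ∀ t, g (r • t) = g t)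
    (t : E) : g t = g 0 := by
  have hpow (n : ℕ) : g (r ^ n • t) = g t := by
    induction n with
    | zero => rw [pow_zero, one_smul]
    | succ n ih => rw [pow_succ', mul_smul, hinv, ih]
  have hlim : Tendsto (fun n : ℕ ↦ r ^ n • t) atTop (𝓝 0) := by
    simpa using (tendsto_pow_atTop_nhds_zero_of_norm_lt_one hr).smul_const t
  exact tendsto_const_nhds_iff.1 ((hg.tendsto.comp hlim).congr hpow)

variable {Y : Type*} [TopologicalSpace Y] [T1Space Y] {G : (Fin 2 → ℝ) → (Fin 2 → ℝ) → Y}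

theorem isClosed_setOf_forall_wedge_ne_zero_imp_eq
    (hcont : ∀ x, ContinuousOn (G x) {y | wedge x y ≠ 0}) (c : Y) :
    IsClosed {y | ∀ x, wedge x y ≠ 0 → G x y = c} := by
  simp only [Set.ofPred_forall]
  refine isClosed_iInter fun x ↦ ⟨?_⟩
  have hopen : IsOpen {y : Fin 2 → ℝ | wedge x y ≠ 0} :=
    isOpen_ne_fun (continuous_wedge.comp (Continuous.prodMk_right x)) continuous_const
  convert (hcont x).isOpen_inter_preimage hopen (isOpen_compl_singleton (x := c)) using 1
  ext y
  simp

theorem apply_eq_of_mulVec_eq_smul {y₀ x₀ : Fin 2 → ℝ}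
    (hcont : ContinuousOn (G · y₀) {x | wedge x y₀ ≠ 0})
    (hsmul : ∀ (a b : ℝ) x y, a ≠ 0 → b ≠ 0 → wedge x y ≠ 0 → G (a • x) (b • y) = G x y)
    {A : Matrix (Fin 2) (Fin 2) ℝ}
    (hinv : ∀ x y, wedge x y ≠ 0 → G (A *ᵥ x) (A *ᵥ y) = G x y)
    {a b : ℝ} (hx₀ : A *ᵥ x₀ = a • x₀) (hy₀ : A *ᵥ y₀ = b • y₀) (hb : b ≠ 0) (hba : |b| < |a|)
    (h₀ : wedge x₀ y₀ ≠ 0) {x : Fin 2 → ℝ} (hx : wedge x y₀ ≠ 0) : G x y₀ = G x₀ y₀ := by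
  have ha : a ≠ 0 := abs_pos.1 ((abs_nonneg b).trans_lt hba)
  have hleaf (t : ℝ) : wedge (x₀ + t • y₀) y₀ ≠ 0 := by rwa [wedge_add_smul_left]
  have hzero : ContinuousAt (fun t : ℝ ↦ G (x₀ + t • y₀) y₀) 0 :=
    (hcont.comp_continuous (f := fun t : ℝ ↦ x₀ + t • y₀) (by fun_prop) hleaf).continuousAt
  have hcontract : |b / a| < 1 := by rwa [abs_div, div_lt_one (abs_pos.2 ha)]
  have hscale (t : ℝ) : G (x₀ + ((b / a) • t) • y₀) y₀ = G (x₀ + t • y₀) y₀ := by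
    have hA : A *ᵥ (x₀ + t • y₀) = a • (x₀ + ((b / a) • t) • y₀) := by
      rw [Matrix.mulVec_add, Matrix.mulVec_smul, hx₀, hy₀, smul_add, smul_smul, smul_smul,
        smul_eq_mul]
      congr 2
      field_simp
    rw [← hinv _ _ (hleaf t), hA, hy₀, hsmul _ _ _ _ ha hb (hleaf _)]
  have hconst := eq_apply_zero_of_smul_invariant hzero hcontract hscale
  have hx_eq : wedge x₀ y₀ • x = wedge x y₀ • (x₀ + (wedge x₀ x / wedge x y₀) • y₀) := by
    rw [wedge_smul_eq_add, smul_add, smul_smul, mul_div_cancel₀ _ hx]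
  calc G x y₀ = G (wedge x₀ y₀ • x) ((1 : ℝ) • y₀) := (hsmul _ _ _ _ h₀ one_ne_zero hx).symm
    _ = G (x₀ + (wedge x₀ x / wedge x y₀) • y₀) y₀ := by
      rw [hx_eq, hsmul _ _ _ _ hx one_ne_zero (hleaf _)]
    _ = G x₀ y₀ := by simpa using hconst (wedge x₀ x / wedge x y₀)

open scoped goldenRatio in
theorem exists_modularToReal_hyperbolic_eigenvectors :
    ∃ (γ : Matrix.SpecialLinearGroup (Fin 2) ℤ) (x y : Fin 2 → ℝ) (a b : ℝ),
      modularToReal γ *ᵥ x = a • x ∧ modularToReal γ *ᵥ y = b • y ∧ b ≠ 0 ∧ |b| < |a| ∧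
        wedge x y ≠ 0 := by
  let γ : Matrix.SpecialLinearGroup (Fin 2) ℤ := ⟨!![2, 1; 1, 1], by simp⟩
  have eigenvector {t : ℝ} (ht : t ^ 2 = t + 1) :
      modularToReal γ *ᵥ ![t, 1] = t ^ 2 • ![t, 1] := by
    rw [modularToReal_mulVec]
    have ht₃ : 2 * t + 1 = t ^ 2 * t := by linear_combination (-(t + 1)) * ht
    ext i
    fin_cases i
    · simp [γ, ht₃]
    · simp [γ, ht]
  have abs_goldenConj_lt : |ψ| < |φ| := by
    rw [abs_of_neg Real.goldenConj_neg, abs_of_pos Real.goldenRatio_pos]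
    linarith [Real.neg_one_lt_goldenConj, Real.one_lt_goldenRatio]
  refine ⟨γ, ![φ, 1], ![ψ, 1], φ ^ 2, ψ ^ 2, eigenvector Real.goldenRatio_sq,
    eigenvector Real.goldenConj_sq, pow_ne_zero 2 Real.goldenConj_ne_zero, ?_, ?_⟩
  · simp only [abs_pow]
    exact pow_lt_pow_left₀ abs_goldenConj_lt (abs_nonneg ψ) two_ne_zero
  · simp [wedge]

theorem exists_forall_wedge_ne_zero_imp_eq
    (hcont_left : ∀ y, ContinuousOn (G · y) {x | wedge x y ≠ 0})
    (hcont_right : ∀ x, ContinuousOn (G x) {y | wedge x y ≠ 0})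
    (hsmul : ∀ (a b : ℝ) x y, a ≠ 0 → b ≠ 0 → wedge x y ≠ 0 → G (a • x) (b • y) = G x y)
    (hinv : ∀ γ x y, wedge x y ≠ 0 → G (modularToReal γ *ᵥ x) (modularToReal γ *ᵥ y) = G x y) :
    ∃ c, ∀ x y, wedge x y ≠ 0 → G x y = c := by
  obtain ⟨γ₀, x₀, y₀, a, b, hx₀, hy₀, hb, hba, h₀⟩ := exists_modularToReal_hyperbolic_eigenvectors
  have hy₀_ne : y₀ ≠ 0 := by
    rintro rfl
    simp [wedge] at h₀
  refine ⟨G x₀ y₀, ?_⟩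
  suffices {y | ∀ x, wedge x y ≠ 0 → G x y = G x₀ y₀} = Set.univ from
    fun x y ↦ Set.eq_univ_iff_forall.1 this y x
  refine eq_univ_of_isClosed_of_modularToReal_mulVec_mem
    (isClosed_setOf_forall_wedge_ne_zero_imp_eq hcont_right _) ?smul_mem ?mulVec_mem
    (v := y₀) ?base_mem hy₀_ne
  case smul_mem =>
    intro t y hy x hxy
    rw [wedge_smul_right] at hxy
    obtain ⟨ht, hxy⟩ := mul_ne_zero_iff.1 hxy
    rw [← hy x hxy, ← hsmul 1 t x y one_ne_zero ht hxy, one_smul]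
  case mulVec_mem =>
    intro γ y hy x hxy
    obtain ⟨x, rfl⟩ : ∃ x', modularToReal γ *ᵥ x' = x :=
      Matrix.mulVec_surjective_iff_isUnit.2
        ((Matrix.isUnit_iff_isUnit_det _).2 (by simp [det_modularToReal])) x
    rw [wedge_mulVec_mulVec, det_modularToReal, one_mul] at hxy
    rw [hinv γ x y hxy, hy x hxy]
  case base_mem =>
    exact fun x ↦ apply_eq_of_mulVec_eq_smul (hcont_left y₀) hsmul (hinv γ₀) hx₀ hy₀ hb hba h₀

end Hopf

theorem no_nonconstant_invariant_on_one_sheeted_hyperboloid_general {Y : Type*}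
    [TopologicalSpace Y] [T1Space Y] {δ : ℝ} (hδ : 0 < δ) {F : Matrix (Fin 2) (Fin 2) ℝ → Y}
    (hFcont : ContinuousOn F (oneSheetedHyperboloid δ))
    (hFinv : ∀ γ : Matrix.SpecialLinearGroup (Fin 2) ℤ, ∀ X ∈ oneSheetedHyperboloid δ,
      F (modularToReal γ * X * (modularToReal γ)⁻¹) = F X) :
    ∀ X ∈ oneSheetedHyperboloid δ, ∀ X' ∈ oneSheetedHyperboloid δ, F X = F X' := by
  obtain ⟨s, hs, rfl⟩ : ∃ s : ℝ, 0 < s ∧ δ = s ^ 2 :=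
    ⟨√δ, Real.sqrt_pos.2 hδ, (Real.sq_sqrt hδ.le).symm⟩
  have hmem {x y : Fin 2 → ℝ} : wedge x y ≠ 0 →
      matrixOfEigenvectors s x y ∈ oneSheetedHyperboloid (s ^ 2) :=
    matrixOfEigenvectors_mem_oneSheetedHyperboloid s
  obtain ⟨c, hc⟩ : ∃ c, ∀ x y, wedge x y ≠ 0 → F (matrixOfEigenvectors s x y) = c := by
    refine exists_forall_wedge_ne_zero_imp_eq (fun y ↦ ?_) (fun x ↦ ?_)
      (fun a b x y ha hb hxy ↦ by rw [matrixOfEigenvectors_smul_smul s ha hb hxy])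
      (fun γ x y hxy ↦ ?_)
    · exact hFcont.comp (continuousOn_matrixOfEigenvectors s continuousOn_id continuousOn_const
        fun _ hxy ↦ hxy) fun _ ↦ hmem
    · exact hFcont.comp (continuousOn_matrixOfEigenvectors s continuousOn_const continuousOn_id
        fun _ hxy ↦ hxy) fun _ ↦ hmem
    · rw [← conj_matrixOfEigenvectors s (by simp [det_modularToReal]) hxy]
      exact hFinv γ _ (hmem hxy)
  have hF : ∀ X ∈ oneSheetedHyperboloid (s ^ 2), F X = c := by
    intro X hX
    obtain ⟨x, y, hxy, rfl⟩ := exists_eq_matrixOfEigenvectors (by linarith) hX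
    exact hc x y hxy
  exact fun X hX X' hX' ↦ (hF X hX).trans (hF X' hX').symm

/-- Theorem 5.1 (case `Γ = PSL(2,ℤ)`): a continuous function on the one-sheeted
hyperboloid `S_δ = {trace = 0, det = −δ}` (`δ > 0`) which is invariant under conjugation
by the modular group is constant. -/
theorem no_nonconstant_invariant_on_one_sheeted_hyperboloid (δ : ℝ) (hδ : 0 < δ)
    (F : Matrix (Fin 2) (Fin 2) ℝ → ℝ)
    (hFcont : ContinuousOn F {X : Matrix (Fin 2) (Fin 2) ℝ | X.trace = 0 ∧ X.det = -δ})
    (hFinv : ∀ γ : Matrix.SpecialLinearGroup (Fin 2) ℤ,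
      ∀ X ∈ {X : Matrix (Fin 2) (Fin 2) ℝ | X.trace = 0 ∧ X.det = -δ},
        F (modularToReal γ * X * (modularToReal γ)⁻¹) = F X) :
    ∀ X ∈ {X : Matrix (Fin 2) (Fin 2) ℝ | X.trace = 0 ∧ X.det = -δ},
      ∀ Y ∈ {X : Matrix (Fin 2) (Fin 2) ℝ | X.trace = 0 ∧ X.det = -δ},
        F X = F Y := by
  exact no_nonconstant_invariant_on_one_sheeted_hyperboloid_general hδ hFcont hFinv
end

section
/- There exists a function F : Matrix (Fin 2) (Fin 2) ℝ → ℝ such that: (i) F is real-analytic on the open set O = {X | (X.trace)² < 4·X.det ∧ X 0 1 > 0}; (ii) F is invariant under conjugation by the modular group on O: F(γ_ℝ * X * γ_ℝ⁻¹) = F(X) for every γ ∈ SL(2,ℤ) and every X ∈ O; and (iii) F is not constant on the sheet {X ∈ O | X.trace = 0 ∧ X.det = 1} of the two-sheeted hyperboloid. -/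
attribute [local instance] Matrix.linftyOpNormedAddCommGroup Matrix.linftyOpNormedRing
  Matrix.linftyOpNormedSpace Matrix.linftyOpNormedAlgebra

/-!
An elliptic matrix, i.e. a real `2 × 2` matrix of negative discriminant, acts on the upper
half-plane with a unique fixed point. This point depends real-analytically on the entries, and it
is equivariant: the fixed point of `γ X γ⁻¹` is `γ • z` when that of `X` is `z`. Hence a
real-analytic `SL(2, ℤ)`-invariant function `u` on `ℍ` yields an invariant function
`X ↦ u (fixed point of X)`, and since every point of `ℍ` is fixed by a matrix of the sheet
`{trace = 0, det = 1, X 0 1 > 0}`, this function is constant there only if `u` is constant.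
For `u` we take `‖Δ(τ)‖² (Im τ)¹²` with `Δ` the modular discriminant: it vanishes nowhere but
tends to `0` at the cusp `i∞`.
-/

open UpperHalfPlane
open scoped MatrixGroups Manifold

section Elliptic

theorem isElliptic_iff_trace_sq_lt {R : Type*} [CommRing R] [PartialOrder R] [IsOrderedRing R]
    {X : Matrix (Fin 2) (Fin 2) R} : X.IsElliptic ↔ X.trace ^ 2 < 4 * X.det := by
  rw [Matrix.IsElliptic, Matrix.discr_fin_two, sub_neg]

theorem det_pos_of_isElliptic {R : Type*} [CommRing R] [LinearOrder R] [IsStrictOrderedRing R]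
    {X : Matrix (Fin 2) (Fin 2) R} (hX : X.IsElliptic) : 0 < X.det := by
  have := isElliptic_iff_trace_sq_lt.1 hX
  have := sq_nonneg X.trace
  linarith

theorem fixedPt_conj (g h : GL (Fin 2) ℝ) (hh : h.IsElliptic)
    (hconj : (g * h * g⁻¹).IsElliptic) :
    fixedPt (g * h * g⁻¹) hconj = g • fixedPt h hh := by
  have hfix : h • fixedPt h hh = fixedPt h hh :=
    (gl_smul_eq_self_iff_eq_fixedPt (det_pos_of_isElliptic hh) hh).2 rfl
  refine ((gl_smul_eq_self_iff_eq_fixedPt (det_pos_of_isElliptic hconj) hconj).1 ?_).symm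
  rw [smul_smul, inv_mul_cancel_right, mul_smul, hfix]

end Elliptic

section EllipticLift

variable {E : Type*}

/-- The fixed point in the upper half-plane of an elliptic matrix `X`, given by the formula of
`UpperHalfPlane.fixedPt` for all matrices, so that its analyticity in `X` can be stated.
The value is meaningless if `X` is not elliptic. -/
noncomputable def ellipticFixedPoint (X : Matrix (Fin 2) (Fin 2) ℝ) : ℂ :=
  (X 0 0 - X 1 1) / (2 * X 1 0) + .I * (√(-X.discr) / (2 * |X 1 0|))

theorem ellipticFixedPoint_coe (g : GL (Fin 2) ℝ) (hg : g.IsElliptic) :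
    ellipticFixedPoint g = fixedPt g hg :=
  rfl

theorem analyticAt_matrix_entry {m n : Type*} [Fintype m] [Fintype n] (i : m) (j : n)
    (X : Matrix m n ℝ) : AnalyticAt ℝ (fun Y : Matrix m n ℝ ↦ Y i j) X :=
  (Matrix.entryLinearMap ℝ ℝ i j).toContinuousLinearMap.analyticAt X

theorem analyticAt_sqrt_comp {V : Type*} [NormedAddCommGroup V] [NormedSpace ℝ V] {φ : V → ℝ}
    {x : V} (hφ : AnalyticAt ℝ φ x) (hx : φ x ≠ 0) : AnalyticAt ℝ (fun y ↦ √(φ y)) x :=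
  AnalyticAt.fun_comp (g := Real.sqrt) (Real.contDiffAt_sqrt (n := ⊤) hx).analyticAt hφ

theorem analyticAt_ellipticFixedPoint {X : Matrix (Fin 2) (Fin 2) ℝ} (hX : X.IsElliptic) :
    AnalyticAt ℝ ellipticFixedPoint X := by
  have hc : X 1 0 ≠ 0 := hX.c_ne_zero
  have hentry (i j : Fin 2) := analyticAt_matrix_entry i j X
  have hdiscr : AnalyticAt ℝ (fun Y : Matrix (Fin 2) (Fin 2) ℝ ↦ -Y.discr) X := by
    simp only [Matrix.discr_fin_two, Matrix.trace_fin_two, Matrix.det_fin_two]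
    exact ((((hentry 0 0).add (hentry 1 1)).pow 2).sub (analyticAt_const.mul
      (((hentry 0 0).mul (hentry 1 1)).sub ((hentry 0 1).mul (hentry 1 0))))).neg
  have hsqrt_discr : AnalyticAt ℝ (fun Y : Matrix (Fin 2) (Fin 2) ℝ ↦ √(-Y.discr)) X :=
    analyticAt_sqrt_comp hdiscr (neg_pos.2 hX).ne'
  have habs : AnalyticAt ℝ (fun Y : Matrix (Fin 2) (Fin 2) ℝ ↦ |Y 1 0|) X := by
    simpa only [Real.sqrt_sq_eq_abs] using
      analyticAt_sqrt_comp ((hentry 1 0).fun_pow 2) (pow_ne_zero 2 hc)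
  have hofReal {φ : Matrix (Fin 2) (Fin 2) ℝ → ℝ} (hφ : AnalyticAt ℝ φ X) :
      AnalyticAt ℝ (fun Y ↦ (φ Y : ℂ)) X :=
    (Complex.ofRealCLM.analyticAt _).fun_comp hφ
  unfold ellipticFixedPoint
  exact (((hofReal (hentry 0 0)).sub (hofReal (hentry 1 1))).div
      (analyticAt_const.mul (hofReal (hentry 1 0))) (by simp [hc])).add
    (analyticAt_const.mul ((hofReal hsqrt_discr).div
      (analyticAt_const.mul (hofReal habs)) (by simp [hc])))

/-- The function on real `2 × 2` matrices induced by a function `u` on the upper half-plane: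
its value at an elliptic matrix is the value of `u` at the fixed point of that matrix. -/
noncomputable def ellipticLift (u : ℍ → E) (X : Matrix (Fin 2) (Fin 2) ℝ) : E :=
  u (ofComplex (ellipticFixedPoint X))

theorem ellipticLift_coe (u : ℍ → E) (g : GL (Fin 2) ℝ) (hg : g.IsElliptic) :
    ellipticLift u g = u (fixedPt g hg) := by
  rw [ellipticLift, ellipticFixedPoint_coe g hg, ofComplex_apply]

theorem ellipticLift_conj {u : ℍ → E} {g : GL (Fin 2) ℝ} (hu : ∀ τ, u (g • τ) = u τ)
    {X : Matrix (Fin 2) (Fin 2) ℝ} (hX : X.IsElliptic) :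
    ellipticLift u (g.val * X * g.val⁻¹) = ellipticLift u X := by
  obtain ⟨h, rfl⟩ : ∃ h : GL (Fin 2) ℝ, h.val = X :=
    ⟨.mkOfDetNeZero X (det_pos_of_isElliptic hX).ne', rfl⟩
  have hval : (g * h * g⁻¹).val = g.val * h.val * g.val⁻¹ := by
    rw [Units.val_mul, Units.val_mul, Matrix.coe_units_inv]
  have hconj : (g * h * g⁻¹).val.IsElliptic := by rwa [hval, Matrix.isElliptic_conj_iff]
  rw [← hval, ellipticLift_coe u _ hconj, fixedPt_conj g h hX hconj, hu, ellipticLift_coe u h hX]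

theorem analyticOnNhd_ellipticLift [NormedAddCommGroup E] [NormedSpace ℝ E] {u : ℍ → E}
    (hu : ∀ τ : ℍ, AnalyticAt ℝ (fun z : ℂ ↦ u (ofComplex z)) τ) :
    AnalyticOnNhd ℝ (ellipticLift u) {X | X.IsElliptic} := by
  intro X (hX : X.IsElliptic)
  let g : GL (Fin 2) ℝ := .mkOfDetNeZero X (det_pos_of_isElliptic hX).ne'
  exact (hu (fixedPt g hX)).fun_comp_of_eq (analyticAt_ellipticFixedPoint hX)
    (ellipticFixedPoint_coe g hX)

/-- The matrix of trace `0`, determinant `1` and positive upper right entry that fixes `τ`;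
this is the standard parametrization of a sheet of the two-sheeted hyperboloid by `ℍ`. -/
noncomputable def sheetPoint (τ : ℍ) : Matrix (Fin 2) (Fin 2) ℝ :=
  τ.im⁻¹ • !![-τ.re, Complex.normSq τ; -1, τ.re]

theorem sheetPoint_zero_one_pos (τ : ℍ) : 0 < sheetPoint τ 0 1 := by
  have := τ.normSq_pos
  have := τ.im_pos
  simp [sheetPoint, *]

theorem trace_sheetPoint (τ : ℍ) : (sheetPoint τ).trace = 0 := by
  simp [sheetPoint, Matrix.trace_fin_two]

theorem det_sheetPoint (τ : ℍ) : (sheetPoint τ).det = 1 := by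
  have := τ.im_ne_zero
  simp only [sheetPoint, Matrix.det_smul, Matrix.det_fin_two_of, Fintype.card_fin,
    Complex.normSq_apply, coe_re, coe_im]
  field_simp
  ring

theorem ellipticFixedPoint_sheetPoint (τ : ℍ) : ellipticFixedPoint (sheetPoint τ) = τ := by
  have hdiscr : √(-(sheetPoint τ).discr) = 2 := by
    rw [Matrix.discr_fin_two, trace_sheetPoint, det_sheetPoint, Real.sqrt_eq_iff_mul_self_eq] <;>
      norm_num
  have him : (τ.im : ℂ) ≠ 0 := mod_cast τ.im_ne_zero
  rw [ellipticFixedPoint, hdiscr]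
  conv_rhs => rw [← Complex.re_add_im τ, coe_re, coe_im]
  simp only [sheetPoint, Matrix.smul_apply, Matrix.of_apply, Matrix.cons_val', Matrix.cons_val_zero,
    Matrix.cons_val_fin_one, Matrix.cons_val_one, smul_eq_mul, mul_neg, mul_one,
    Complex.ofReal_neg, Complex.ofReal_mul, Complex.ofReal_inv, Complex.ofReal_ofNat, abs_neg,
    abs_inv, abs_of_pos τ.im_pos]
  field_simp
  ring

theorem ellipticLift_sheetPoint (u : ℍ → E) (τ : ℍ) : ellipticLift u (sheetPoint τ) = u τ := by
  rw [ellipticLift, ellipticFixedPoint_sheetPoint, ofComplex_apply]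

end EllipticLift

section Petersson

theorem norm_petersson_self (k : ℤ) (f : ℍ → ℂ) (τ : ℍ) :
    ‖petersson k f f τ‖ = Complex.normSq (f τ) * τ.im ^ k := by
  rw [petersson, ← Complex.normSq_eq_conj_mul_self, norm_mul, norm_zpow, Complex.norm_real,
    Complex.norm_real, Real.norm_of_nonneg (Complex.normSq_nonneg _),
    Real.norm_of_nonneg τ.im_pos.le]

theorem analyticAt_norm_petersson_self (k : ℤ) {f : ℍ → ℂ} (hf : MDiff f) (τ : ℍ) :
    AnalyticAt ℝ (fun z : ℂ ↦ ‖petersson k f f (ofComplex z)‖) τ := by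
  have hf' : AnalyticAt ℝ (fun z : ℂ ↦ f (ofComplex z)) τ :=
    ((UpperHalfPlane.mdifferentiable_iff.1 hf).analyticAt
      (isOpen_upperHalfPlaneSet.mem_nhds τ.im_pos)).restrictScalars
  have hre := (Complex.reCLM.analyticAt _).fun_comp hf'
  have him := (Complex.imCLM.analyticAt _).fun_comp hf'
  have him_zpow : AnalyticAt ℝ (fun z : ℂ ↦ z.im ^ k) τ :=
    (Complex.imCLM.analyticAt (τ : ℂ)).fun_zpow τ.im_ne_zero
  refine (((hre.mul hre).add (him.mul him)).mul him_zpow).congr ?_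
  filter_upwards [isOpen_upperHalfPlaneSet.mem_nhds τ.im_pos] with z hz
  simp [norm_petersson_self, Complex.normSq_apply, ofComplex_apply_of_im_pos hz]

theorem exists_ne_of_isZeroAtImInfty {E : Type*} [Zero E] [TopologicalSpace E] [T1Space E]
    {u : ℍ → E} (hu : IsZeroAtImInfty u) {τ : ℍ} (hτ : u τ ≠ 0) : ∃ τ' : ℍ, u τ' ≠ u τ :=
  (Filter.Tendsto.eventually_ne hu hτ.symm).exists

/-- The `SL(2, ℤ)`-invariant function `‖Δ(τ)‖² (Im τ)¹²` on the upper half-plane, where `Δ` is the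
modular discriminant; see `norm_petersson_self` for the comparison of the two expressions. -/
noncomputable def discriminantNorm (τ : ℍ) : ℝ :=
  ‖petersson 12 CuspForm.discriminant CuspForm.discriminant τ‖

theorem discriminantNorm_smul (γ : SL(2, ℤ)) (τ : ℍ) :
    discriminantNorm (Matrix.SpecialLinearGroup.mapGL ℝ γ • τ) = discriminantNorm τ :=
  SlashInvariantFormClass.norm_petersson_smul (Γ := 𝒮ℒ) ⟨γ, rfl⟩

theorem analyticAt_discriminantNorm (τ : ℍ) :
    AnalyticAt ℝ (fun z : ℂ ↦ discriminantNorm (ofComplex z)) τ :=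
  analyticAt_norm_petersson_self 12 CuspForm.discriminant.holo' τ

theorem discriminantNorm_ne_zero (τ : ℍ) : discriminantNorm τ ≠ 0 := by
  simp [discriminantNorm, petersson, ModularForm.discriminant_ne_zero, τ.im_ne_zero]

theorem isZeroAtImInfty_discriminantNorm : IsZeroAtImInfty discriminantNorm :=
  tendsto_zero_iff_norm_tendsto_zero.1 <|
    IsZeroAtImInfty.petersson_isZeroAtImInfty_left 12 𝒮ℒ (f := CuspForm.discriminant)
      ModularForm.discriminant_isZeroAtImInfty CuspForm.discriminant

end Petersson

theorem exists_nonconstant_analytic_modular_invariant_general :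
    ∃ F : Matrix (Fin 2) (Fin 2) ℝ → ℝ,
      AnalyticOnNhd ℝ F {X | X.IsElliptic} ∧
      (∀ γ : SL(2, ℤ), ∀ X : Matrix (Fin 2) (Fin 2) ℝ, X.IsElliptic →
        F (modularToReal γ * X * (modularToReal γ)⁻¹) = F X) ∧
      ∃ X Y : Matrix (Fin 2) (Fin 2) ℝ, (0 < X 0 1 ∧ X.trace = 0 ∧ X.det = 1) ∧
        (0 < Y 0 1 ∧ Y.trace = 0 ∧ Y.det = 1) ∧ F X ≠ F Y := by
  obtain ⟨τ, hτ⟩ :=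
    exists_ne_of_isZeroAtImInfty isZeroAtImInfty_discriminantNorm (discriminantNorm_ne_zero I)
  -- Invariance type-checks because `modularToReal γ` unfolds to the matrix of `mapGL ℝ γ`.
  refine ⟨ellipticLift discriminantNorm, analyticOnNhd_ellipticLift analyticAt_discriminantNorm,
    fun γ X hX ↦ ellipticLift_conj (discriminantNorm_smul γ) hX, sheetPoint τ, sheetPoint I,
    ⟨sheetPoint_zero_one_pos τ, trace_sheetPoint τ, det_sheetPoint τ⟩,
    ⟨sheetPoint_zero_one_pos I, trace_sheetPoint I, det_sheetPoint I⟩, ?_⟩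
  rwa [ellipticLift_sheetPoint, ellipticLift_sheetPoint]

/-- Key ingredient of Theorem 5.2: there is a real-analytic function on the region
`{(trace X)² < 4 det X, X 0 1 > 0}` (corresponding to sheets of the two-sheeted
hyperboloids `Δ < 0`), invariant under conjugation by the modular group, and nonconstant
on the sheet `{trace = 0, det = 1}` of the two-sheeted hyperboloid. -/
theorem exists_nonconstant_analytic_modular_invariant :
    ∃ F : Matrix (Fin 2) (Fin 2) ℝ → ℝ,
      AnalyticOnNhd ℝ F
        {X : Matrix (Fin 2) (Fin 2) ℝ | (X.trace) ^ 2 < 4 * X.det ∧ X 0 1 > 0} ∧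
      (∀ γ : Matrix.SpecialLinearGroup (Fin 2) ℤ,
        ∀ X ∈ {X : Matrix (Fin 2) (Fin 2) ℝ | (X.trace) ^ 2 < 4 * X.det ∧ X 0 1 > 0},
          F (modularToReal γ * X * (modularToReal γ)⁻¹) = F X) ∧
      (∃ X ∈ {X : Matrix (Fin 2) (Fin 2) ℝ |
          ((X.trace) ^ 2 < 4 * X.det ∧ X 0 1 > 0) ∧ X.trace = 0 ∧ X.det = 1},
        ∃ Y ∈ {X : Matrix (Fin 2) (Fin 2) ℝ |
          ((X.trace) ^ 2 < 4 * X.det ∧ X 0 1 > 0) ∧ X.trace = 0 ∧ X.det = 1},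
          F X ≠ F Y) := by
  obtain ⟨F, hF, hinv, X, Y, hX, hY, hne⟩ := exists_nonconstant_analytic_modular_invariant_general
  exact ⟨F, hF.mono fun Z hZ ↦ isElliptic_iff_trace_sq_lt.2 hZ.1,
    fun γ Z hZ ↦ hinv γ Z (isElliptic_iff_trace_sq_lt.2 hZ.1),
    X, ⟨⟨by simp [hX], hX.1⟩, hX.2⟩, Y, ⟨⟨by simp [hY], hY.1⟩, hY.2⟩, hne⟩
end

section
/- Let g ≥ 2 and let G be the group presented with generators a₁, …, a_g, b₁, …, b_g, γ and relations aᵢγaᵢ⁻¹γ⁻¹ = 1 and bᵢγbᵢ⁻¹γ⁻¹ = 1 for i = 1, …, g, together with γ^{2−2g}·((a₁b₁a₁⁻¹b₁⁻¹)⋯(a_gb_ga_g⁻¹b_g⁻¹))⁻¹ = 1. Then G is not almost commutative: G has no commutative subgroup of finite index, i.e. every subgroup H ≤ G of finite index is non-abelian. -/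
/-- Generator `aᵢ` of the fundamental group of the unit tangent bundle of a genus `g`
surface, as an element of the free group. -/
def genA (g : ℕ) (i : Fin g) : FreeGroup (Fin g ⊕ Fin g ⊕ Unit) :=
  FreeGroup.of (Sum.inl i)

/-- Generator `bᵢ`. -/
def genB (g : ℕ) (i : Fin g) : FreeGroup (Fin g ⊕ Fin g ⊕ Unit) :=
  FreeGroup.of (Sum.inr (Sum.inl i))

/-- The central generator `γ` (the class of the fibre). -/
def genC (g : ℕ) : FreeGroup (Fin g ⊕ Fin g ⊕ Unit) :=
  FreeGroup.of (Sum.inr (Sum.inr ()))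

/-- The relations `aᵢγaᵢ⁻¹γ⁻¹`, `bᵢγbᵢ⁻¹γ⁻¹` and
`γ^(2−2g)·((a₁b₁a₁⁻¹b₁⁻¹)⋯(a_g b_g a_g⁻¹ b_g⁻¹))⁻¹` of the fundamental group of the unit
tangent bundle of a closed orientable surface of genus `g`. -/
def unitTangentBundleRels (g : ℕ) : Set (FreeGroup (Fin g ⊕ Fin g ⊕ Unit)) :=
  (⋃ i : Fin g, {genA g i * genC g * (genA g i)⁻¹ * (genC g)⁻¹}) ∪
  (⋃ i : Fin g, {genB g i * genC g * (genB g i)⁻¹ * (genC g)⁻¹}) ∪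
  {genC g ^ ((2 : ℤ) - 2 * g) *
    (((List.finRange g).map
      (fun i => genA g i * genB g i * (genA g i)⁻¹ * (genB g i)⁻¹)).prod)⁻¹}

/-!
Killing the fibre `γ` and the generators `bᵢ` retracts the group onto the free group on the `aᵢ`.
A finite-index subgroup contains positive powers of `a₁` and `a₂`, and these do not commute because
their images are positive words, which are already reduced.
-/

theorem isReduced_map_prodMk {α : Type*} (ε : Bool) (l : List α) :
    FreeGroup.IsReduced (l.map (·, ε)) :=
  (List.isChain_map _).2 (List.pairwise_of_forall fun _ _ _ => rfl).isChain

theorem not_commute_pow_freeGroup_of_of_ne {α : Type*} {a b : α} (hab : a ≠ b) {m n : ℕ}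
    (hm : m ≠ 0) (hn : n ≠ 0) : ¬ Commute (FreeGroup.of a ^ m) (FreeGroup.of b ^ n) := by
  classical
  have toWord_pow_mul_pow (c d : α) (k l : ℕ) :
      (FreeGroup.of c ^ k * FreeGroup.of d ^ l).toWord =
        (List.replicate k c ++ List.replicate l d).map (·, true) := by
    rw [FreeGroup.toWord_mul, FreeGroup.toWord_of_pow, FreeGroup.toWord_of_pow,
      ← (isReduced_map_prodMk true _).reduce_eq, List.map_append, List.map_replicate,
      List.map_replicate]
  intro h
  have heads := congrArg (List.head? ∘ FreeGroup.toWord) h.eq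
  simp [toWord_pow_mul_pow, List.head?_append, List.head?_replicate, hm, hn, hab] at heads

theorem exists_not_commute_of_index_ne_zero {G : Type*} [Group G] {H : Subgroup G}
    (hH : H.index ≠ 0) {x y : G}
    (hxy : ∀ m n : ℕ, m ≠ 0 → n ≠ 0 → ¬ Commute (x ^ m) (y ^ n)) :
    ∃ u ∈ H, ∃ v ∈ H, ¬ Commute u v := by
  obtain ⟨m, hm, -, hxm⟩ := Subgroup.exists_pow_mem_of_index_ne_zero hH x
  obtain ⟨n, hn, -, hyn⟩ := Subgroup.exists_pow_mem_of_index_ne_zero hH y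
  exact ⟨x ^ m, hxm, y ^ n, hyn, hxy m n hm.ne' hn.ne'⟩

theorem lift_elim_one_eq_one_of_mem_unitTangentBundleRels {K : Type*} [Group K] {g : ℕ}
    (u : Fin g → K) {r : FreeGroup (Fin g ⊕ Fin g ⊕ Unit)} (hr : r ∈ unitTangentBundleRels g) :
    FreeGroup.lift (Sum.elim u 1) r = 1 := by
  have map_genB (i : Fin g) : FreeGroup.lift (Sum.elim u 1) (genB g i) = 1 := by simp [genB]
  have map_genC : FreeGroup.lift (Sum.elim u 1) (genC g) = 1 := by simp [genC]
  simp only [unitTangentBundleRels, Set.mem_union, Set.mem_iUnion, Set.mem_singleton_iff] at hr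
  rcases hr with (⟨i, rfl⟩ | ⟨i, rfl⟩) | rfl
  · simp [map_genC]
  · simp [map_genB, map_genC]
  · simp [map_genB, map_genC, map_list_prod, Function.comp_def]

/-- The retraction of the unit tangent bundle group onto the free group on the `aᵢ` that kills `γ`
and every `bᵢ`. Geometrically, it projects the unit tangent bundle to the surface and then includes
the surface as the boundary of a handlebody in which the curves `bᵢ` bound discs. -/
def unitTangentBundleToFreeGroup (g : ℕ) :
    PresentedGroup (unitTangentBundleRels g) →* FreeGroup (Fin g) :=
  PresentedGroup.toGroup fun _ => lift_elim_one_eq_one_of_mem_unitTangentBundleRels FreeGroup.of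

theorem unitTangentBundleToFreeGroup_of_inl {g : ℕ} (i : Fin g) :
    unitTangentBundleToFreeGroup g (PresentedGroup.of (Sum.inl i)) = FreeGroup.of i :=
  PresentedGroup.toGroup.of _

theorem not_commute_pow_of_inl_of_ne {g : ℕ} {i j : Fin g} (hij : i ≠ j) {m n : ℕ}
    (hm : m ≠ 0) (hn : n ≠ 0) :
    ¬ Commute ((PresentedGroup.of (Sum.inl i) : PresentedGroup (unitTangentBundleRels g)) ^ m)
      (PresentedGroup.of (Sum.inl j) ^ n) := fun h =>
  not_commute_pow_freeGroup_of_of_ne hij hm hn <| by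
    simpa only [map_pow, unitTangentBundleToFreeGroup_of_inl] using
      h.map (unitTangentBundleToFreeGroup g)

/-- The fundamental group of the unit tangent bundle of a closed orientable surface of
genus `g ≥ 2` is not almost commutative: every finite-index subgroup is non-abelian. -/
theorem unit_tangent_bundle_surface_group_not_almost_commutative (g : ℕ) (hg : 2 ≤ g) :
    ∀ H : Subgroup (PresentedGroup (unitTangentBundleRels g)),
      H.index ≠ 0 → ∃ x ∈ H, ∃ y ∈ H, x * y ≠ y * x := by
  intro H hH
  have a₁_ne_a₂ : (⟨0, by omega⟩ : Fin g) ≠ ⟨1, by omega⟩ := by simp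
  exact exists_not_commute_of_index_ne_zero hH fun _ _ =>
    not_commute_pow_of_inl_of_ne a₁_ne_a₂
end
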